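/- Let μ be a purely point measure on ℝ^d belonging to S*(ℝ^d) with uniformly bounded masses sup_{λ∈supp μ} |μ(λ)| < ∞, whose support has bounded density, and whose spectrum supp μ̂ is locally finite. Then μ̂ is a purely point measure with uniformly bounded masses. -/

import Mathlib

open MeasureTheory SchwartzMap Metric Set
open scoped Pointwise RealInnerProductSpace ENNReal NNReal

noncomputable section

/-- Euclidean space `ℝ^d`. -/
abbrev Rd (d : ℕ) : Type := EuclideanSpace ℝ (Fin d)

/-- The space `S*(ℝ^d)` of tempered distributions: continuous linear functionals
on the Schwartz space `S(ℝ^d)`. -/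
abbrev TemperedDist (d : ℕ) : Type := SchwartzMap (Rd d) ℂ →L[ℂ] ℂ

/-- The Fourier transform of a tempered distribution: `f̂(φ) = f(φ̂)`. -/
def fourierTD {d : ℕ} (f : TemperedDist d) : TemperedDist d :=
  f.comp (fourierTransformCLM ℂ)

/-- The support of a tempered distribution: `x ∈ supp f` iff for every open
neighbourhood `U` of `x` there is a smooth compactly supported test function
supported in `U` on which `f` does not vanish. -/
def tdSupport {d : ℕ} (f : TemperedDist d) : Set (Rd d) :=
  {x | ∀ U : Set (Rd d), IsOpen U → x ∈ U →
    ∃ φ : SchwartzMap (Rd d) ℂ, HasCompactSupport (⇑φ) ∧ tsupport (⇑φ) ⊆ U ∧ f φ ≠ 0}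

/-- A set is locally finite if its intersection with every ball is finite. -/
def LocFinite {d : ℕ} (A : Set (Rd d)) : Prop :=
  ∀ (x : Rd d) (r : ℝ), (A ∩ Metric.ball x r).Finite

/-- A set is uniformly discrete if distances between distinct points are
bounded below by a positive constant. -/
def UniformlyDiscrete {d : ℕ} (A : Set (Rd d)) : Prop :=
  ∃ η > (0:ℝ), ∀ x ∈ A, ∀ y ∈ A, x ≠ y → η ≤ dist x y

/-- A set is polynomially discrete (p-discrete) if
`|x - x'| ≥ c min{1, |x|^{-h}}` for distinct points `x, x'` of the set. -/
def PDiscrete {d : ℕ} (A : Set (Rd d)) : Prop :=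
  ∃ c > (0:ℝ), ∃ h > (0:ℝ), ∀ x ∈ A, ∀ y ∈ A, x ≠ y →
    c * (if ‖x‖ ≤ 1 then 1 else ‖x‖ ^ (-h)) ≤ dist x y

/-- A set has bounded density if it is locally finite and the number of its
points in balls of radius 1 is uniformly bounded. -/
def BoundedDensity {d : ℕ} (A : Set (Rd d)) : Prop :=
  LocFinite A ∧ ∃ N : ℕ, ∀ x : Rd d, (A ∩ Metric.ball x 1).ncard ≤ N

/-- A set is relatively dense if it intersects every ball of some fixed radius `R`. -/
def RelDense {d : ℕ} (A : Set (Rd d)) : Prop :=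
  ∃ R : ℝ, 0 < R ∧ ∀ x : Rd d, ∃ a ∈ A, dist x a ≤ R

/-- A full-rank lattice in `ℝ^d` is the image of `ℤ^d` under an invertible
linear operator. -/
def IsFullRankLattice {d : ℕ} (L : Set (Rd d)) : Prop :=
  ∃ T : Rd d →ₗ[ℝ] Rd d, Function.Bijective T ∧
    L = T '' {x : Rd d | ∀ i, ∃ n : ℤ, x i = (n : ℝ)}

/-- The multi-indices `k ∈ (ℕ ∪ {0})^d` with `‖k‖ = k₁ + ⋯ + k_d ≤ K`. -/
def mIdx (d K : ℕ) : Finset (Fin d → ℕ) :=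
  (Finset.Iic fun _ => K).filter fun k => (∑ i, k i) ≤ K

/-- Partial derivative in the `i`-th coordinate direction. -/
def pderiv' {d : ℕ} (i : Fin d) (φ : Rd d → ℂ) : Rd d → ℂ :=
  fun x => fderiv ℝ φ x (EuclideanSpace.single i (1:ℝ))

/-- The mixed partial derivative `D^k = ∂^{k₁}_{x₁} ⋯ ∂^{k_d}_{x_d}`. -/
def Dmulti {d : ℕ} (k : Fin d → ℕ) : (Rd d → ℂ) → (Rd d → ℂ) :=
  ((List.finRange d).map fun i => (pderiv' i)^[k i]).foldr (· ∘ ·) id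

/-- The action of `D^k δ_λ` on a test function: `φ ↦ (-1)^{‖k‖} (D^k φ)(λ)`. -/
def dkDelta {d : ℕ} (k : Fin d → ℕ) (lam : Rd d) (φ : SchwartzMap (Rd d) ℂ) : ℂ :=
  (-1 : ℂ) ^ (∑ i, k i) * Dmulti k (⇑φ) lam

/-- The exponential `e^{2πi⟨x,w⟩}`. -/
def e2pi {d : ℕ} (x w : Rd d) : ℂ :=
  Complex.exp (((2 * Real.pi : ℝ) : ℂ) * Complex.I * ((⟪x, w⟫ : ℝ) : ℂ))

/-- A trigonometric polynomial: a finite sum `Σ c_ω e^{2πi⟨x,ω⟩}`. -/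
def IsTrigPoly {d : ℕ} (P : Rd d → ℂ) : Prop :=
  ∃ (n : ℕ) (cc : Fin n → ℂ) (w : Fin n → Rd d),
    ∀ x, P x = ∑ i, cc i * e2pi x (w i)

/-- The monomial `x^m = x₁^{m₁} ⋯ x_d^{m_d}` (as a complex number). -/
def monom {d : ℕ} (m : Fin d → ℕ) (x : Rd d) : ℂ := ((∏ i, (x i) ^ (m i) : ℝ) : ℂ)

/-- The total variation of the pure point measure with masses `b` on the open
ball `B(0,r)`: `Σ_{|γ| < r} |b(γ)|` (as an extended nonnegative real). -/
def ballVar {d : ℕ} (b : Rd d → ℂ) (r : ℝ) : ℝ≥0∞ :=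
  ∑' γ : Rd d, if ‖γ‖ < r then (‖b γ‖₊ : ℝ≥0∞) else 0

/-- The pure point measure `μ = Σ_λ a(λ) δ_λ` belongs to `S*(ℝ^d)` and is
represented there by the tempered distribution `f`: its support is countable,
`Σ_λ |a(λ)| |φ(λ)| < ∞` for every Schwartz function `φ`, and the (automatically
continuous) functional `φ ↦ Σ_λ a(λ) φ(λ)` coincides with `f`. -/
def RepMeasure {d : ℕ} (a : Rd d → ℂ) (f : TemperedDist d) : Prop :=
  {x | a x ≠ 0}.Countable ∧
  (∀ φ : SchwartzMap (Rd d) ℂ, Summable fun lam => ‖a lam‖ * ‖φ lam‖) ∧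
  (∀ φ : SchwartzMap (Rd d) ℂ, f φ = ∑' lam, a lam * φ lam)

/-- A continuous function on `ℝ^d` is almost periodic if for every `ε > 0` its
set of `ε`-almost periods is relatively dense. -/
def APFunction {d : ℕ} (g : Rd d → ℂ) : Prop :=
  Continuous g ∧ ∀ ε > (0:ℝ), RelDense {τ : Rd d | ∀ t, ‖g (t + τ) - g t‖ < ε}

/-- A tempered distribution is almost periodic if for every smooth compactly
supported `ψ` the function `t ↦ f(ψ(t - ·))` is almost periodic. -/
def APDistribution {d : ℕ} (f : TemperedDist d) : Prop :=
  ∀ ψ : Rd d → ℂ, ContDiff ℝ (⊤ : ℕ∞) ψ → HasCompactSupport ψ →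
    ∀ Φ : Rd d → SchwartzMap (Rd d) ℂ, (∀ t y, Φ t y = ψ (t - y)) →
      APFunction fun t => f (Φ t)

/-!
On the Fourier side, replacing a test function `ψ` by `ψ ((· - γ) / ε)` multiplies `|ψ̂ (y)|` by
`ε ^ d` and dilates `y` to `ε y`. When the support `Λ` of `μ` has bounded density,
`ε ^ d ∑_{λ ∈ Λ} (1 + |ε λ|) ^ (-d - 1)` is a Riemann sum bounded uniformly in `ε ≤ 1`, so a measure
with bounded masses makes `μ̂` bounded on all dilates of `ψ`, uniformly in `γ` and `ε`.

Let `γ` be the only spectral point on the support of `φ`, let `φ γ = 0`, and let `χ` be a cutoff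
equal to `1` near `0`. Then `φ` may be replaced by `φ · χ ((· - γ) / ε)`, the dilate of the blow-up
`φ (γ + ε ·) χ`, which tends to `0` in the Schwartz space. Hence `μ̂ φ = 0`, i.e. `μ̂` is a multiple
of `δ_γ` near `γ`, and its mass there, the value of `μ̂` on a dilate of `χ`, is bounded uniformly
in `γ`. A partition of unity glues these local descriptions.
-/

open Filter
open scoped Topology ContDiff Manifold FourierTransform

theorem sum_setIntegral_le_mul_integral {α ι : Type*} [MeasurableSpace α] {μ : Measure α}
    {T : Finset ι} {s : ι → Set α} (hs : ∀ i ∈ T, MeasurableSet (s i)) {h : α → ℝ} (h0 : 0 ≤ h)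
    (hint : Integrable h μ) {N : ℕ} (hN : ∀ x, {i | i ∈ T ∧ x ∈ s i}.ncard ≤ N) :
    ∑ i ∈ T, ∫ x in s i, h x ∂μ ≤ N * ∫ x, h x ∂μ := by
  classical
  have hind : ∀ i ∈ T, Integrable ((s i).indicator h) μ := fun i hi => hint.indicator (hs i hi)
  calc ∑ i ∈ T, ∫ x in s i, h x ∂μ = ∑ i ∈ T, ∫ x, (s i).indicator h x ∂μ :=
        Finset.sum_congr rfl fun i hi => (integral_indicator (hs i hi)).symm
    _ = ∫ x, ∑ i ∈ T, (s i).indicator h x ∂μ := (integral_finsetSum T hind).symm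
    _ ≤ ∫ x, N * h x ∂μ := by
        refine integral_mono (integrable_finsetSum T hind) (hint.const_mul _) fun x => ?_
        have hcard : (T.filter (x ∈ s ·)).card ≤ N := by
          rw [← Set.ncard_coe_finset, Finset.coe_filter]
          exact hN x
        simp only [Set.indicator_apply, ← Finset.sum_filter, Finset.sum_const, nsmul_eq_mul]
        gcongr
        exact h0 x
    _ = N * ∫ x, h x ∂μ := integral_const_mul _ _

theorem one_add_norm_rpow_neg_le {E : Type*} [SeminormedAddCommGroup E] {x y : E} {r : ℝ}
    (hr : 0 ≤ r) (hxy : dist x y ≤ 1) :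
    (1 + ‖x‖) ^ (-r) ≤ 2 ^ r * (1 + ‖y‖) ^ (-r) := by
  have hle : (1 + ‖y‖) / 2 ≤ 1 + ‖x‖ := by
    have := norm_le_norm_add_norm_sub x y
    rw [← dist_eq_norm] at this
    linarith [norm_nonneg x]
  calc (1 + ‖x‖) ^ (-r) ≤ ((1 + ‖y‖) / 2) ^ (-r) :=
        Real.rpow_le_rpow_of_nonpos (by positivity) hle (neg_nonpos.2 hr)
    _ = 2 ^ r * (1 + ‖y‖) ^ (-r) := by
        rw [Real.div_rpow (by positivity) zero_le_two, Real.rpow_neg zero_le_two, div_inv_eq_mul,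
          mul_comm]

theorem pow_finrank_mul_sum_one_add_norm_smul_le {E : Type*} [NormedAddCommGroup E]
    [NormedSpace ℝ E] [FiniteDimensional ℝ E] [MeasurableSpace E] [BorelSpace E] (μ : Measure E)
    [μ.IsAddHaarMeasure] {T : Finset E} {N : ℕ} (hN : ∀ x, ((T : Set E) ∩ ball x 1).ncard ≤ N)
    {r : ℝ} (hr : Module.finrank ℝ E < r) {ε : ℝ} (hε : 0 < ε) (hε1 : ε ≤ 1) :
    μ.real (ball 0 1) * (ε ^ Module.finrank ℝ E * ∑ l ∈ T, (1 + ‖ε • l‖) ^ (-r)) ≤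
      N * (2 ^ r * ∫ x, (1 + ‖x‖) ^ (-r) ∂μ) := by
  have hr0 : 0 ≤ r := (Nat.cast_nonneg _).trans hr.le
  have hint : Integrable (fun x : E => 2 ^ r * (1 + ‖x‖) ^ (-r)) μ :=
    (integrable_one_add_norm hr).const_mul _
  have hvol (x : E) : μ.real (ball x ε) = ε ^ Module.finrank ℝ E * μ.real (ball 0 1) := by
    rw [measureReal_def, Measure.addHaar_ball_of_pos μ x hε, ENNReal.toReal_mul,
      ENNReal.toReal_ofReal (by positivity), measureReal_def]
  have hball (l : E) : μ.real (ball (ε • l) ε) * (1 + ‖ε • l‖) ^ (-r) ≤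
      ∫ x in ball (ε • l) ε, 2 ^ r * (1 + ‖x‖) ^ (-r) ∂μ := by
    rw [← smul_eq_mul, ← setIntegral_const]
    refine setIntegral_mono_on (integrableOn_const measure_ball_lt_top.ne) hint.integrableOn
      measurableSet_ball fun x hx => one_add_norm_rpow_neg_le hr0 ?_
    exact (mem_ball'.1 hx).le.trans hε1
  have hmult (x : E) : {l | l ∈ T ∧ x ∈ ball (ε • l) ε}.ncard ≤ N := by
    refine (Set.ncard_le_ncard ?_ (T.finite_toSet.inter_of_left _)).trans
      (hN (ε⁻¹ • x))
    rintro l ⟨hl, hx⟩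
    rw [mem_ball', ← smul_inv_smul₀ hε.ne' x, dist_smul₀, Real.norm_of_nonneg hε.le] at hx
    exact ⟨hl, lt_of_mul_lt_mul_left (hx.trans_eq (mul_one ε).symm) hε.le⟩
  calc μ.real (ball 0 1) * (ε ^ Module.finrank ℝ E * ∑ l ∈ T, (1 + ‖ε • l‖) ^ (-r))
      = ∑ l ∈ T, μ.real (ball (ε • l) ε) * (1 + ‖ε • l‖) ^ (-r) := by
        simp only [hvol, Finset.mul_sum]
        exact Finset.sum_congr rfl fun l _ => by ring
    _ ≤ ∑ l ∈ T, ∫ x in ball (ε • l) ε, 2 ^ r * (1 + ‖x‖) ^ (-r) ∂μ :=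
        Finset.sum_le_sum fun l _ => hball l
    _ ≤ N * ∫ x, 2 ^ r * (1 + ‖x‖) ^ (-r) ∂μ :=
        sum_setIntegral_le_mul_integral (fun _ _ => measurableSet_ball)
          (fun x => by positivity) hint hmult
    _ = N * (2 ^ r * ∫ x, (1 + ‖x‖) ^ (-r) ∂μ) := by rw [integral_const_mul]

theorem BoundedDensity.exists_pow_mul_sum_le {d : ℕ} {A : Set (Rd d)} (hA : BoundedDensity A)
    {r : ℝ} (hr : d < r) :
    ∃ C : ℝ, ∀ ε : ℝ, 0 < ε → ε ≤ 1 → ∀ T : Finset (Rd d), ↑T ⊆ A →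
      ε ^ d * ∑ l ∈ T, (1 + ‖ε • l‖) ^ (-r) ≤ C := by
  obtain ⟨hfin, N, hN⟩ := hA
  have hV : 0 < (volume : Measure (Rd d)).real (ball 0 1) :=
    ENNReal.toReal_pos (measure_ball_pos _ _ one_pos).ne' measure_ball_lt_top.ne
  refine ⟨N * (2 ^ r * ∫ x : Rd d, (1 + ‖x‖) ^ (-r)) / volume.real (ball (0 : Rd d) 1),
    fun ε hε hε1 T hT => (le_div_iff₀' hV).2 ?_⟩
  have hT1 (x : Rd d) : ((T : Set (Rd d)) ∩ ball x 1).ncard ≤ N :=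
    (Set.ncard_le_ncard (Set.inter_subset_inter_left _ hT) (hfin x 1)).trans (hN x)
  simpa only [finrank_euclideanSpace_fin] using
    pow_finrank_mul_sum_one_add_norm_smul_le volume hT1 (by simpa using hr) hε hε1

section Dilation

theorem fourier_comp_inv_smul_sub {V E : Type*} [NormedAddCommGroup V] [InnerProductSpace ℝ V]
    [FiniteDimensional ℝ V] [MeasurableSpace V] [BorelSpace V] [NormedAddCommGroup E]
    [NormedSpace ℂ E] (f : V → E) (γ y : V) {ε : ℝ} (hε : ε ≠ 0) :
    𝓕 (fun v => f (ε⁻¹ • (v - γ))) y =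
      |ε ^ Module.finrank ℝ V| • Real.fourierChar (-⟪γ, y⟫) • 𝓕 f (ε • y) := by
  set g : V → E := fun u => Real.fourierChar (-⟪ε • u + γ, y⟫) • f u with hg
  have hchar (u : V) : g u =
      Real.fourierChar (-⟪γ, y⟫) • Real.fourierChar (-⟪u, ε • y⟫) • f u := by
    simp only [hg, smul_smul, ← AddChar.map_add_eq_mul, inner_add_left, real_inner_smul_left,
      real_inner_smul_right, neg_add_rev]
  calc 𝓕 (fun v => f (ε⁻¹ • (v - γ))) y = ∫ v, g (ε⁻¹ • (v - γ)) := by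
        simp only [Real.fourier_eq, hg, smul_inv_smul₀ hε, sub_add_cancel]
    _ = ∫ v, g (ε⁻¹ • v) := integral_sub_right_eq_self (fun v => g (ε⁻¹ • v)) γ
    _ = |ε ^ Module.finrank ℝ V| • ∫ u, g u := Measure.integral_comp_inv_smul _ g ε
    _ = _ := by
      simp only [hchar, Circle.smul_def (Real.fourierChar (-⟪γ, y⟫)), integral_smul,
        Real.fourier_eq]

variable {E F : Type*} [NormedAddCommGroup E] [NormedSpace ℝ E] [NormedAddCommGroup F]
  [NormedSpace ℂ F]

/-- The dilation operator `ψ ↦ ψ ((· - γ) / ε)` on Schwartz functions, which concentrates `ψ`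
around the point `γ` as `ε → 0`. -/
def dilation (γ : E) {ε : ℝ} (hε : ε ≠ 0) : 𝓢(E, F) →L[ℂ] 𝓢(E, F) :=
  compSubConstCLM ℂ γ ∘L
    compCLMOfContinuousLinearEquiv ℂ (ContinuousLinearEquiv.smulLeft (Units.mk0 ε hε)⁻¹)

@[simp]
theorem dilation_apply (γ : E) {ε : ℝ} (hε : ε ≠ 0) (ψ : 𝓢(E, F)) (x : E) :
    dilation γ hε ψ x = ψ (ε⁻¹ • (x - γ)) := rfl

theorem tsupport_dilation_subset {γ : E} {ε : ℝ} (hε : 0 < ε) {χ : 𝓢(E, F)}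
    (hχ : tsupport χ ⊆ closedBall 0 1) : tsupport (dilation γ hε.ne' χ) ⊆ closedBall γ ε := by
  refine closure_minimal (fun x hx => ?_) isClosed_closedBall
  have : ε⁻¹ • (x - γ) ∈ closedBall (0 : E) 1 := hχ (subset_tsupport _ hx)
  rw [mem_closedBall_zero_iff, norm_smul, norm_inv, Real.norm_of_nonneg hε.le,
    inv_mul_le_iff₀ hε, mul_one] at this
  rwa [mem_closedBall_iff_norm]

theorem eventuallyEq_dilation_one (γ : E) {ε : ℝ} (hε : ε ≠ 0) {χ : 𝓢(E, ℂ)}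
    (hχ : χ =ᶠ[𝓝 0] 1) : dilation γ hε χ =ᶠ[𝓝 γ] 1 :=
  hχ.comp_tendsto <|
    (show Continuous fun x => ε⁻¹ • (x - γ) by fun_prop).tendsto' γ 0 (by simp)

theorem norm_fourier_dilation {V : Type*} [NormedAddCommGroup V] [InnerProductSpace ℝ V]
    [FiniteDimensional ℝ V] [MeasurableSpace V] [BorelSpace V] (γ y : V) {ε : ℝ} (hε : ε ≠ 0)
    (ψ : 𝓢(V, F)) :
    ‖𝓕 (dilation γ hε ψ) y‖ = |ε| ^ Module.finrank ℝ V * ‖𝓕 ψ (ε • y)‖ := by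
  rw [SchwartzMap.fourier_coe, SchwartzMap.fourier_coe]
  change ‖𝓕 (fun v => ψ (ε⁻¹ • (v - γ))) y‖ = _
  rw [fourier_comp_inv_smul_sub _ _ _ hε, norm_smul, Circle.norm_smul,
    Real.norm_of_nonneg (abs_nonneg _), abs_pow]

end Dilation

section PartitionOfUnity

variable {E : Type*} [NormedAddCommGroup E] [NormedSpace ℝ E] [FiniteDimensional ℝ E]

variable (E) in
theorem exists_schwartz_eventuallyEq_one :
    ∃ χ : 𝓢(E, ℂ), χ =ᶠ[𝓝 0] 1 ∧ tsupport χ ⊆ closedBall 0 1 := by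
  let β : ContDiffBump (0 : E) := ⟨1 / 2, 1, by norm_num, by norm_num⟩
  have hβ : HasCompactSupport fun x => (β x : ℂ) :=
    β.hasCompactSupport.comp_left Complex.ofReal_zero
  refine ⟨hβ.toSchwartzMap (Complex.ofRealCLM.contDiff.comp β.contDiff), ?_, ?_⟩
  · filter_upwards [β.eventuallyEq_one] with x hx
    exact (congrArg _ hx).trans Complex.ofReal_one
  · rw [← β.tsupport_eq]
    exact closure_mono fun x hx => Complex.ofReal_ne_zero.1 hx

theorem exists_finset_sum_eq_of_tsupport_subset_iUnion {F : Type*} [NormedAddCommGroup F]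
    [NormedSpace ℝ F] {φ : 𝓢(E, F)} (hφ : HasCompactSupport φ) {ι : Type*} {U : ι → Set E}
    (hU : ∀ i, IsOpen (U i)) (hφU : tsupport φ ⊆ ⋃ i, U i) :
    ∃ (s : Finset ι) (ψ : ι → 𝓢(E, F)),
      (∀ i, HasCompactSupport (ψ i) ∧ tsupport (ψ i) ⊆ U i) ∧ φ = ∑ i ∈ s, ψ i := by
  obtain ⟨ρ, hρ⟩ := SmoothPartitionOfUnity.exists_isSubordinate 𝓘(ℝ, E)
    (isClosed_tsupport φ) U hU hφU
  have hfin := ρ.locallyFinite.finite_nonempty_inter_compact hφ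
  have hsupp (i : ι) : HasCompactSupport fun x => ρ i x • φ x := HasCompactSupport.smul_left hφ
  refine ⟨hfin.toFinset, fun i => (hsupp i).toSchwartzMap
    ((ρ i).contMDiff.contDiff.smul φ.smooth'), fun i => ⟨hsupp i, ?_⟩, ?_⟩
  · exact (tsupport_smul_subset_left (ρ i) φ).trans (hρ i)
  · ext x
    simp only [sum_apply, HasCompactSupport.toSchwartzMap_toFun, ← Finset.sum_smul]
    by_cases hx : x ∈ tsupport φ
    · have hsum : ∑ i ∈ hfin.toFinset, ρ i x = 1 := by
        rw [← ρ.sum_eq_one hx]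
        refine (finsum_eq_sum_of_support_subset _ fun i hi => ?_).symm
        rw [Set.Finite.coe_toFinset]
        exact ⟨x, hi, hx⟩
      rw [hsum, one_smul]
    · rw [image_eq_zero_of_notMem_tsupport hx, smul_zero]

end PartitionOfUnity

section Support

variable {d : ℕ}

theorem apply_eq_zero_of_disjoint_tdSupport (F : TemperedDist d) {φ : 𝓢(Rd d, ℂ)}
    (hφ : HasCompactSupport φ) (hdisj : Disjoint (tsupport φ) (tdSupport F)) : F φ = 0 := by
  let 𝓤 := {U : Set (Rd d) // IsOpen U ∧
    ∀ ψ : 𝓢(Rd d, ℂ), HasCompactSupport ψ → tsupport ψ ⊆ U → F ψ = 0}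
  have hcover : tsupport φ ⊆ ⋃ U : 𝓤, U.1 := fun x hx => by
    have hxF : x ∉ tdSupport F := Set.disjoint_left.1 hdisj hx
    simp only [tdSupport, Set.mem_ofPred_eq] at hxF
    push Not at hxF
    obtain ⟨U, hU, hxU, hF⟩ := hxF
    exact Set.mem_iUnion.2 ⟨⟨U, hU, hF⟩, hxU⟩
  obtain ⟨s, ψ, hψ, rfl⟩ := exists_finset_sum_eq_of_tsupport_subset_iUnion hφ
    (fun U : 𝓤 => U.2.1) hcover
  rw [map_sum]
  exact Finset.sum_eq_zero fun U _ => U.2.2 _ (hψ U).1 (hψ U).2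

theorem apply_eq_apply_smulLeftCLM (F : TemperedDist d) {γ : Rd d} {φ κ : 𝓢(Rd d, ℂ)}
    (hφ : HasCompactSupport φ) (hγ : tsupport φ ∩ tdSupport F ⊆ {γ}) (hκ : κ =ᶠ[𝓝 γ] 1) :
    F φ = F (smulLeftCLM ℂ φ κ) := by
  have happly (x : Rd d) : (φ - smulLeftCLM ℂ φ κ) x = φ x * (1 - κ x) := by
    simp [smulLeftCLM_apply_apply φ.hasTemperateGrowth, mul_sub]
  have hsub : tsupport (φ - smulLeftCLM ℂ φ κ) ⊆ tsupport φ :=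
    closure_mono fun x hx => left_ne_zero_of_mul ((happly x).symm.trans_ne hx)
  have hγ' : γ ∉ tsupport (φ - smulLeftCLM ℂ φ κ) := by
    rw [notMem_tsupport_iff_eventuallyEq]
    filter_upwards [hκ] with x hx
    rw [happly, hx, Pi.one_apply, sub_self, mul_zero, Pi.zero_apply]
  have hdisj : Disjoint (tsupport (φ - smulLeftCLM ℂ φ κ)) (tdSupport F) :=
    Set.disjoint_left.2 fun x hx hxF => hγ' (hγ ⟨hsub hx, hxF⟩ ▸ hx)
  rw [← sub_eq_zero, ← map_sub]
  exact apply_eq_zero_of_disjoint_tdSupport F (hφ.of_isClosed_subset (isClosed_tsupport _) hsub)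
    hdisj

end Support

section BlowUp

variable {E F : Type*} [NormedAddCommGroup E] [NormedSpace ℝ E] [NormedAddCommGroup F]

section Real

variable [NormedSpace ℝ F]

theorem hasTemperateGrowth_comp_add_smul (γ : E) (ε : ℝ) (φ : 𝓢(E, F)) :
    (fun u => φ (γ + ε • u)).HasTemperateGrowth :=
  φ.hasTemperateGrowth.comp (by fun_prop)

theorem exists_norm_apply_add_smul_le {φ : 𝓢(E, F)} {γ : E} (hγ : φ γ = 0) :
    ∃ B, 0 ≤ B ∧ ∀ ε : ℝ, 0 ≤ ε → ∀ u, ‖φ (γ + ε • u)‖ ≤ B * ε * ‖u‖ := by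
  obtain ⟨B, hB0, hB⟩ := φ.decay 0 1
  simp only [pow_zero, one_mul, norm_iteratedFDeriv_one] at hB
  refine ⟨B, hB0.le, fun ε hε u => ?_⟩
  have := convex_univ.norm_image_sub_le_of_norm_fderiv_le (𝕜 := ℝ)
    (fun x _ => φ.differentiableAt) (fun x _ => hB x) (mem_univ γ) (mem_univ (γ + ε • u))
  rwa [hγ, sub_zero, add_sub_cancel_left, norm_smul, Real.norm_of_nonneg hε, ← mul_assoc] at this

theorem exists_norm_iteratedFDeriv_comp_add_smul_le_of_ne_zero (φ : 𝓢(E, F)) (γ : E)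
    {i : ℕ} (hi : i ≠ 0) :
    ∃ B, 0 ≤ B ∧ ∀ ε : ℝ, 0 ≤ ε → ε ≤ 1 → ∀ u,
      ‖iteratedFDeriv ℝ i (fun u => φ (γ + ε • u)) u‖ ≤ B * ε := by
  obtain ⟨B, hB0, hB⟩ := φ.decay 0 i
  simp only [pow_zero, one_mul] at hB
  refine ⟨B, hB0.le, fun ε hε hε1 u => ?_⟩
  have hsmooth : ContDiff ℝ i fun z : E => φ (γ + z) :=
    (φ.smooth i).comp (contDiff_const.add contDiff_id)
  rw [iteratedFDeriv_comp_const_smul ε hsmooth]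
  simp only [iteratedFDeriv_comp_add_left, norm_smul, norm_pow, Real.norm_of_nonneg hε]
  rw [mul_comm]
  gcongr
  · exact hB _
  · exact pow_le_of_le_one hε hε1 hi

theorem exists_norm_iteratedFDeriv_comp_add_smul_le {φ : 𝓢(E, F)} {γ : E} (hγ : φ γ = 0) (i : ℕ) :
    ∃ B, 0 ≤ B ∧ ∀ ε : ℝ, 0 ≤ ε → ε ≤ 1 → ∀ u,
      ‖iteratedFDeriv ℝ i (fun u => φ (γ + ε • u)) u‖ ≤ B * ε * (1 + ‖u‖) := by
  rcases eq_or_ne i 0 with rfl | hi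
  · obtain ⟨B, hB0, hB⟩ := exists_norm_apply_add_smul_le hγ
    refine ⟨B, hB0, fun ε hε _ u => ?_⟩
    rw [norm_iteratedFDeriv_zero]
    refine (hB ε hε u).trans ?_
    gcongr
    linarith
  · obtain ⟨B, hB0, hB⟩ := exists_norm_iteratedFDeriv_comp_add_smul_le_of_ne_zero φ γ hi
    refine ⟨B, hB0, fun ε hε hε1 u => (hB ε hε hε1 u).trans ?_⟩
    exact le_mul_of_one_le_right (by positivity) (by linarith [norm_nonneg u])

theorem exists_pow_mul_one_add_norm_mul_norm_iteratedFDeriv_le (χ : 𝓢(E, F)) (k i : ℕ) :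
    ∃ D, 0 ≤ D ∧ ∀ u, ‖u‖ ^ k * (1 + ‖u‖) * ‖iteratedFDeriv ℝ i χ u‖ ≤ D := by
  obtain ⟨D₁, hD₁, h₁⟩ := χ.decay k i
  obtain ⟨D₂, hD₂, h₂⟩ := χ.decay (k + 1) i
  refine ⟨D₁ + D₂, by positivity, fun u => ?_⟩
  calc ‖u‖ ^ k * (1 + ‖u‖) * ‖iteratedFDeriv ℝ i χ u‖
      = ‖u‖ ^ k * ‖iteratedFDeriv ℝ i χ u‖ + ‖u‖ ^ (k + 1) * ‖iteratedFDeriv ℝ i χ u‖ := by ring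
    _ ≤ D₁ + D₂ := add_le_add (h₁ u) (h₂ u)

end Real

variable [NormedSpace ℂ F]

/-- The blow-up `u ↦ φ (γ + ε u) χ u` of a test function `φ` at the point `γ`, localized by `χ`. -/
def blowUp (γ : E) (ε : ℝ) (φ : 𝓢(E, ℂ)) (χ : 𝓢(E, F)) : 𝓢(E, F) :=
  smulLeftCLM F (fun u => φ (γ + ε • u)) χ

@[simp]
theorem blowUp_apply (γ : E) (ε : ℝ) (φ : 𝓢(E, ℂ)) (χ : 𝓢(E, F)) (u : E) :
    blowUp γ ε φ χ u = φ (γ + ε • u) • χ u :=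
  smulLeftCLM_apply_apply (hasTemperateGrowth_comp_add_smul γ ε φ) χ u

theorem dilation_blowUp (γ : E) {ε : ℝ} (hε : ε ≠ 0) (φ : 𝓢(E, ℂ)) (χ : 𝓢(E, F)) :
    dilation γ hε (blowUp γ ε φ χ) = smulLeftCLM F φ (dilation γ hε χ) := by
  ext x
  rw [dilation_apply, blowUp_apply, smul_inv_smul₀ hε, add_sub_cancel,
    smulLeftCLM_apply_apply φ.hasTemperateGrowth, dilation_apply]

theorem exists_seminorm_blowUp_le {φ : 𝓢(E, ℂ)} {γ : E} (hγ : φ γ = 0) (χ : 𝓢(E, F)) (k n : ℕ) :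
    ∃ K, ∀ ε : ℝ, 0 ≤ ε → ε ≤ 1 → SchwartzMap.seminorm ℂ k n (blowUp γ ε φ χ) ≤ ε * K := by
  choose B hB0 hB using exists_norm_iteratedFDeriv_comp_add_smul_le hγ
  choose D hD0 hD using exists_pow_mul_one_add_norm_mul_norm_iteratedFDeriv_le χ k
  refine ⟨∑ i ∈ Finset.range (n + 1), n.choose i * B i * D (n - i), fun ε hε hε1 => ?_⟩
  refine SchwartzMap.seminorm_le_bound ℂ k n _ (mul_nonneg hε (Finset.sum_nonneg fun i _ =>
    mul_nonneg (mul_nonneg (Nat.cast_nonneg _) (hB0 i)) (hD0 _))) fun u => ?_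
  have hmul : ⇑(blowUp γ ε φ χ) = fun u => φ (γ + ε • u) • χ u := funext (blowUp_apply γ ε φ χ)
  calc ‖u‖ ^ k * ‖iteratedFDeriv ℝ n (blowUp γ ε φ χ) u‖
      ≤ ‖u‖ ^ k * ∑ i ∈ Finset.range (n + 1), n.choose i *
          ‖iteratedFDeriv ℝ i (fun u => φ (γ + ε • u)) u‖ * ‖iteratedFDeriv ℝ (n - i) χ u‖ := by
        rw [hmul]
        gcongr
        exact norm_iteratedFDeriv_smul_le (hasTemperateGrowth_comp_add_smul γ ε φ).1 χ.smooth' u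
          (by exact_mod_cast le_top)
    _ ≤ ‖u‖ ^ k * ∑ i ∈ Finset.range (n + 1), n.choose i * (B i * ε * (1 + ‖u‖)) *
          ‖iteratedFDeriv ℝ (n - i) χ u‖ := by
        gcongr with i
        exact hB i ε hε hε1 u
    _ = ε * ∑ i ∈ Finset.range (n + 1), n.choose i * B i *
          (‖u‖ ^ k * (1 + ‖u‖) * ‖iteratedFDeriv ℝ (n - i) χ u‖) := by
        simp only [Finset.mul_sum]
        exact Finset.sum_congr rfl fun i _ => by ring
    _ ≤ ε * ∑ i ∈ Finset.range (n + 1), n.choose i * B i * D (n - i) := by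
        gcongr with i
        · exact mul_nonneg (Nat.cast_nonneg _) (hB0 i)
        · exact hD _ u

theorem tendsto_blowUp {φ : 𝓢(E, ℂ)} {γ : E} (hγ : φ γ = 0) (χ : 𝓢(E, F)) :
    Tendsto (fun ε => blowUp γ ε φ χ) (𝓝[>] 0) (𝓝 0) := by
  rw [(schwartz_withSeminorms ℂ E F).tendsto_nhds]
  rintro ⟨k, n⟩ δ hδ
  obtain ⟨K, hK⟩ := exists_seminorm_blowUp_le hγ χ k n
  have hlim : Tendsto (fun ε : ℝ => ε * K) (𝓝[>] 0) (𝓝 0) :=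
    ((continuous_mul_const K).tendsto' 0 0 (zero_mul K)).mono_left nhdsWithin_le_nhds
  filter_upwards [hlim.eventually_lt_const hδ, Ioo_mem_nhdsGT one_pos] with ε hεδ hε
  rw [sub_zero]
  exact (hK ε hε.1.le hε.2.le).trans_lt hεδ

end BlowUp

section DilationBounded

variable {d : ℕ}

/-- A tempered distribution is bounded under dilations if its values on the functions
`ψ ((· - γ) / ε)`, `0 < ε ≤ 1`, are controlled by one continuous seminorm of `ψ`, independent of
`γ` and `ε`. -/
def DilationBounded (F : TemperedDist d) : Prop :=
  ∃ q : Seminorm ℂ 𝓢(Rd d, ℂ), Continuous q ∧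
    ∀ (γ : Rd d) (ε : ℝ) (hε : 0 < ε), ε ≤ 1 → ∀ ψ, ‖F (dilation γ hε.ne' ψ)‖ ≤ q ψ

theorem RepMeasure.norm_apply_le {a : Rd d → ℂ} {f : TemperedDist d} (hrep : RepMeasure a f)
    {A : ℝ} (hA : ∀ x, ‖a x‖ ≤ A) {φ : 𝓢(Rd d, ℂ)} {S : ℝ}
    (hS : ∀ T : Finset (Rd d), ↑T ⊆ {x | a x ≠ 0} → ∑ l ∈ T, ‖φ l‖ ≤ S) : ‖f φ‖ ≤ A * S := by
  classical
  have hA0 : 0 ≤ A := (norm_nonneg _).trans (hA 0)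
  have hsum : Summable fun l => ‖a l * φ l‖ := by simpa only [norm_mul] using hrep.2.1 φ
  rw [hrep.2.2 φ]
  refine (norm_tsum_le_tsum_norm hsum).trans (hsum.tsum_le_of_sum_le fun T => ?_)
  calc ∑ l ∈ T, ‖a l * φ l‖ = ∑ l ∈ T with a l ≠ 0, ‖a l * φ l‖ :=
        (Finset.sum_filter_of_ne fun l _ hl => left_ne_zero_of_mul (norm_ne_zero_iff.1 hl)).symm
    _ ≤ ∑ l ∈ T with a l ≠ 0, A * ‖φ l‖ := by
        gcongr with l
        rw [norm_mul]
        gcongr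
        exact hA l
    _ = A * ∑ l ∈ T with a l ≠ 0, ‖φ l‖ := (Finset.mul_sum _ _ _).symm
    _ ≤ A * S := by
        gcongr
        exact hS _ fun l hl => (Finset.mem_filter.1 hl).2

theorem exists_seminorm_norm_apply_le (E F : Type*) [NormedAddCommGroup E] [NormedSpace ℝ E]
    [NormedAddCommGroup F] [NormedSpace ℂ F] (k : ℕ) :
    ∃ p : Seminorm ℂ 𝓢(E, F), Continuous p ∧ ∀ ψ y, ‖ψ y‖ ≤ p ψ * (1 + ‖y‖) ^ (-k : ℝ) := by
  refine ⟨(2 : ℝ≥0) ^ k • (Finset.Iic (k, 0)).sup (schwartzSeminormFamily ℂ E F), ?_, ?_⟩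
  · exact (Seminorm.continuous_finsetSup fun m _ =>
      (schwartz_withSeminorms ℂ E F).continuous_seminorm m).const_smul _
  · intro ψ y
    have h := one_add_le_sup_seminorm_apply (𝕜 := ℂ) (le_refl k) le_rfl ψ y (m := (k, 0))
    rw [norm_iteratedFDeriv_zero] at h
    rw [Real.rpow_neg (by positivity), Real.rpow_natCast, ← div_eq_mul_inv,
      le_div_iff₀' (by positivity)]
    exact h

theorem dilationBounded_fourierTD {a : Rd d → ℂ} {f : TemperedDist d} (hrep : RepMeasure a f)
    (hbdd : ∃ C : ℝ, ∀ x, ‖a x‖ ≤ C) (hBD : BoundedDensity {x | a x ≠ 0}) :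
    DilationBounded (fourierTD f) := by
  obtain ⟨A, hA⟩ := hbdd
  obtain ⟨C, hC⟩ := hBD.exists_pow_mul_sum_le (r := (d + 1 : ℕ)) (by simp)
  obtain ⟨p, hp, hpb⟩ := exists_seminorm_norm_apply_le (Rd d) ℂ (d + 1)
  have hA0 : 0 ≤ A := (norm_nonneg _).trans (hA 0)
  have hC0 : 0 ≤ C := by simpa using hC 1 one_pos le_rfl ∅ (by simp)
  refine ⟨(A * C).toNNReal • p.comp (fourierTransformCLM ℂ).toLinearMap, ?_, ?_⟩
  · exact (hp.comp (fourierTransformCLM ℂ).continuous).const_smul _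
  intro γ ε hε hε1 ψ
  have hS (T : Finset (Rd d)) (hT : ↑T ⊆ {x | a x ≠ 0}) :
      ∑ l ∈ T, ‖𝓕 (dilation γ hε.ne' ψ) l‖ ≤ p (𝓕 ψ) * C :=
    calc ∑ l ∈ T, ‖𝓕 (dilation γ hε.ne' ψ) l‖ = ∑ l ∈ T, ε ^ d * ‖𝓕 ψ (ε • l)‖ := by
          simp only [norm_fourier_dilation, abs_of_pos hε, finrank_euclideanSpace_fin]
      _ ≤ ∑ l ∈ T, ε ^ d * (p (𝓕 ψ) * (1 + ‖ε • l‖) ^ (-(d + 1 : ℕ) : ℝ)) := by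
          gcongr with l
          exact hpb _ _
      _ = p (𝓕 ψ) * (ε ^ d * ∑ l ∈ T, (1 + ‖ε • l‖) ^ (-(d + 1 : ℕ) : ℝ)) := by
          simp only [Finset.mul_sum]
          exact Finset.sum_congr rfl fun l _ => by ring
      _ ≤ p (𝓕 ψ) * C := by
          gcongr
          exact hC ε hε hε1 T hT
  calc ‖fourierTD f (dilation γ hε.ne' ψ)‖ ≤ A * (p (𝓕 ψ) * C) := hrep.norm_apply_le hA hS
    _ = ((A * C).toNNReal • p.comp (fourierTransformCLM ℂ).toLinearMap) ψ := by
        rw [smul_apply, NNReal.smul_def, Real.coe_toNNReal _ (by positivity), smul_eq_mul,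
          mul_left_comm, mul_comm]
        rfl

namespace DilationBounded

variable {F : TemperedDist d}

theorem apply_eq_zero (hF : DilationBounded F) {γ : Rd d} {φ : 𝓢(Rd d, ℂ)}
    (hφ : HasCompactSupport φ) (hφF : tsupport φ ∩ tdSupport F ⊆ {γ}) (hγ : φ γ = 0) : F φ = 0 := by
  obtain ⟨q, hq, hqF⟩ := hF
  obtain ⟨χ, hχ1, -⟩ := exists_schwartz_eventuallyEq_one (Rd d)
  have hbound : ∀ᶠ ε in 𝓝[>] (0 : ℝ), ‖F φ‖ ≤ q (blowUp γ ε φ χ) := by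
    filter_upwards [Ioo_mem_nhdsGT one_pos] with ε hε
    rw [apply_eq_apply_smulLeftCLM F hφ hφF (eventuallyEq_dilation_one γ hε.1.ne' hχ1),
      ← dilation_blowUp]
    exact hqF γ ε hε.1 hε.2.le _
  have hlim : Tendsto (fun ε => q (blowUp γ ε φ χ)) (𝓝[>] 0) (𝓝 0) :=
    (hq.tendsto' 0 0 (map_zero q)).comp (tendsto_blowUp hγ χ)
  exact norm_le_zero_iff.1 (ge_of_tendsto hlim hbound)

theorem apply_eq_mul (hF : DilationBounded F) {γ : Rd d} {φ κ : 𝓢(Rd d, ℂ)}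
    (hφ : HasCompactSupport φ) (hφF : tsupport φ ∩ tdSupport F ⊆ {γ}) (hκ : HasCompactSupport κ)
    (hκF : tsupport κ ∩ tdSupport F ⊆ {γ}) (hκγ : κ γ = 1) : F φ = F κ * φ γ := by
  have hsub : tsupport (φ - φ γ • κ) ⊆ tsupport φ ∪ tsupport κ :=
    (tsupport_sub φ (φ γ • κ)).trans (union_subset_union_right _
      (tsupport_smul_subset_right (fun _ => φ γ) κ))
  have hzero : F (φ - φ γ • κ) = 0 := by
    refine hF.apply_eq_zero (γ := γ) ((hφ.union hκ).of_isClosed_subset (isClosed_tsupport _) hsub)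
      ((inter_subset_inter_left _ hsub).trans ?_) (by simp [hκγ])
    rw [union_inter_distrib_right]
    exact union_subset hφF hκF
  rw [map_sub, map_smul, smul_eq_mul, mul_comm] at hzero
  exact sub_eq_zero.1 hzero

end DilationBounded

theorem LocFinite.exists_closedBall_inter_subset_singleton {A : Set (Rd d)} (hA : LocFinite A)
    (γ : Rd d) :
    ∃ ε : ℝ, 0 < ε ∧ ε ≤ 1 ∧ closedBall γ ε ∩ A ⊆ {γ} := by
  have hfin : ((A ∩ ball γ 1) \ {γ}).Finite := (hA γ 1).subset sdiff_subset
  obtain ⟨δ, hδ, hδA⟩ := nhds_basis_closedBall.mem_iff.1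
    (hfin.isClosed.isOpen_compl.mem_nhds fun h : γ ∈ (A ∩ ball γ 1) \ {γ} => h.2 rfl)
  refine ⟨min δ (1 / 2), by positivity, (min_le_right _ _).trans (by norm_num), ?_⟩
  rintro x ⟨hx, hxA⟩
  rw [mem_closedBall, le_min_iff] at hx
  by_contra hne
  exact hδA hx.1 ⟨⟨hxA, mem_ball.2 (hx.2.trans_lt (by norm_num))⟩, hne⟩

theorem LocFinite.countable {A : Set (Rd d)} (hA : LocFinite A) : A.Countable := by
  rw [← inter_univ A, ← iUnion_ball_nat 0, inter_iUnion]
  exact countable_iUnion fun n => (hA 0 n).countable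

theorem DilationBounded.exists_hasSum {F : TemperedDist d} (hF : DilationBounded F)
    (hΓ : LocFinite (tdSupport F)) :
    ∃ b : Rd d → ℂ, Function.support b ⊆ tdSupport F ∧ (∃ C : ℝ, ∀ x, ‖b x‖ ≤ C) ∧
      ∀ φ : 𝓢(Rd d, ℂ), HasCompactSupport φ → HasSum (fun x => b x * φ x) (F φ) := by
  obtain ⟨χ, hχ1, hχsupp⟩ := exists_schwartz_eventuallyEq_one (Rd d)
  choose r hr0 hr1 hr using hΓ.exists_closedBall_inter_subset_singleton
  let κ (x : Rd d) : 𝓢(Rd d, ℂ) := dilation x (hr0 x).ne' χ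
  have hκsupp (x : Rd d) : tsupport (κ x) ⊆ closedBall x (r x) :=
    tsupport_dilation_subset (hr0 x) hχsupp
  have hκ (x : Rd d) : HasCompactSupport (κ x) :=
    (isCompact_closedBall x (r x)).of_isClosed_subset (isClosed_tsupport _) (hκsupp x)
  have hκF (x : Rd d) : tsupport (κ x) ∩ tdSupport F ⊆ {x} :=
    (inter_subset_inter_left _ (hκsupp x)).trans (hr x)
  have hκx (x : Rd d) : κ x x = 1 := (eventuallyEq_dilation_one x (hr0 x).ne' hχ1).eq_of_nhds
  have hsupp (x : Rd d) (hx : x ∉ tdSupport F) : F (κ x) = 0 :=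
    apply_eq_zero_of_disjoint_tdSupport F (hκ x) <| Set.disjoint_left.2 fun y hy hyF =>
      hx (hκF x ⟨hy, hyF⟩ ▸ hyF)
  refine ⟨fun x => F (κ x), fun x hx => not_imp_comm.1 (hsupp x) hx, ?_, fun φ hφ => ?_⟩
  · obtain ⟨q, -, hq⟩ := hF
    exact ⟨q χ, fun x => hq x (r x) (hr0 x) (hr1 x) χ⟩
  · obtain ⟨s, ψ, hψ, rfl⟩ := exists_finset_sum_eq_of_tsupport_subset_iUnion hφ
      (fun x => isOpen_ball (x := x) (ε := r x))
      fun x _ => mem_iUnion.2 ⟨x, mem_ball_self (hr0 x)⟩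
    simp only [map_sum, sum_apply, Finset.mul_sum]
    refine hasSum_sum fun γ _ => ?_
    have hψγ : tsupport (ψ γ) ∩ tdSupport F ⊆ {γ} :=
      (inter_subset_inter_left _ ((hψ γ).2.trans ball_subset_closedBall)).trans (hr γ)
    rw [hF.apply_eq_mul (hψ γ).1 hψγ (hκ γ) (hκF γ) (hκx γ)]
    refine hasSum_single γ fun x hx => ?_
    by_cases hxF : x ∈ tdSupport F
    · rw [image_eq_zero_of_notMem_tsupport fun h => hx (hψγ ⟨h, hxF⟩), mul_zero]
    · rw [hsupp x hxF, zero_mul]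

end DilationBounded

/-- (Last part of Proposition 3.) If `μ` is a pure point
measure in `S*(ℝ^d)` with uniformly bounded masses, support of bounded density
and locally finite spectrum, then `μ̂` is a pure point measure with uniformly
bounded masses. -/
theorem statement11 {d : ℕ} (a : Rd d → ℂ) (f : TemperedDist d)
    (hrep : RepMeasure a f)
    (hbdd : ∃ C : ℝ, ∀ x, ‖a x‖ ≤ C)
    (hBD : BoundedDensity {x | a x ≠ 0})
    (hΓ : LocFinite (tdSupport (fourierTD f))) :
    ∃ b : Rd d → ℂ,
      {x | b x ≠ 0}.Countable ∧
      (∀ φ : SchwartzMap (Rd d) ℂ, HasCompactSupport (⇑φ) →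
        fourierTD f φ = ∑' x : Rd d, b x * φ x) ∧
      ∃ C' : ℝ, ∀ x, ‖b x‖ ≤ C' := by
  obtain ⟨b, hb, hC, hsum⟩ := (dilationBounded_fourierTD hrep hbdd hBD).exists_hasSum hΓ
  exact ⟨b, hΓ.countable.mono hb, fun φ hφ => (hsum φ hφ).tsum_eq.symm, hC⟩
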